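/- arXiv:1701.00203 — 3 statements merged into one kernel-verified Lean document; each statement's English description precedes it below -/
import Mathlib

section
/- Let n ≥ 2 be an integer and τ > 0 a real number. Let f : ℝ → ℝ be continuous, nonnegative on [0, τ], strictly positive on the open interval (0, τ), and such that the function x ↦ f(x)^(1/(n−1)) is concave on the interval [0, τ]. Then ∫₀^τ y·f(y) dy ≤ (n/(n+1))·τ·∫₀^τ f(y) dy. -/
open intervalIntegral Set

theorem stmt_0 (n : ℕ) (hn : 2 ≤ n) (τ : ℝ) (hτ : 0 < τ) (f : ℝ → ℝ)
    (hcont : Continuous f)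
    (hnonneg : ∀ x ∈ Set.Icc (0:ℝ) τ, 0 ≤ f x)
    (hpos : ∀ x ∈ Set.Ioo (0:ℝ) τ, 0 < f x)
    (hconc : ConcaveOn ℝ (Set.Icc (0:ℝ) τ)
      (fun x => f x ^ ((1:ℝ) / ((n : ℝ) - 1)))) :
    ∫ y in (0:ℝ)..τ, y * f y ≤ ((n : ℝ) / ((n : ℝ) + 1)) * τ * ∫ y in (0:ℝ)..τ, f y := by
  obtain ⟨m, rfl⟩ : ∃ m, n = m + 1 := ⟨n - 1, by omega⟩
  have hm : m ≠ 0 := by omega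
  have hexp : (1:ℝ) / (((m + 1 : ℕ) : ℝ) - 1) = (m : ℝ)⁻¹ := by push_cast; simp
  rw [hexp] at hconc
  have hpow : ∀ x ∈ Set.Icc (0:ℝ) τ, (f x ^ ((m:ℝ)⁻¹)) ^ m = f x := fun x hx =>
    Real.rpow_inv_natCast_pow (hnonneg x hx) hm
  have key : ∀ x y, 0 ≤ x → 0 < y → x ≤ y → y ≤ τ → f y * x ^ m ≤ f x * y ^ m := by
    intro x y hx hy hxy hyτ
    have hyI : y ∈ Set.Icc (0:ℝ) τ := ⟨hy.le, hyτ⟩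
    have hxI : x ∈ Set.Icc (0:ℝ) τ := ⟨hx, hxy.trans hyτ⟩
    have h0I : (0:ℝ) ∈ Set.Icc (0:ℝ) τ := ⟨le_rfl, hτ.le⟩
    have hle : x / y ≤ 1 := (div_le_one hy).2 hxy
    have h := hconc.2 h0I hyI (sub_nonneg.2 hle) (div_nonneg hx hy.le) (by ring)
    have e : (1 - x / y) • (0:ℝ) + (x / y) • y = x := by
      simp [hy.ne']
    rw [e] at h
    simp only [smul_eq_mul] at h
    have g0 : 0 ≤ f 0 ^ ((m:ℝ)⁻¹) := Real.rpow_nonneg (hnonneg 0 h0I) _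
    have gy : 0 ≤ f y ^ ((m:ℝ)⁻¹) := Real.rpow_nonneg (hnonneg y hyI) _
    have h2 : x / y * f y ^ ((m:ℝ)⁻¹) ≤ f x ^ ((m:ℝ)⁻¹) := by
      have := mul_nonneg (sub_nonneg.2 hle) g0
      linarith
    have h3 := pow_le_pow_left₀ (mul_nonneg (div_nonneg hx hy.le) gy) h2 m
    rw [mul_pow, hpow y hyI, hpow x hxI, div_pow] at h3
    have hyp : 0 < y ^ m := pow_pos hy m
    calc f y * x ^ m = (x ^ m / y ^ m * f y) * y ^ m := by field_simp
      _ ≤ _ := mul_le_mul_of_nonneg_right h3 hyp.le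
  set c : ℝ := (((m + 1 : ℕ) : ℝ) / (((m + 1 : ℕ) : ℝ) + 1)) * τ with hc
  have hc0 : 0 < c := by positivity
  have hcτ : c ≤ τ := by
    rw [hc]
    apply mul_le_of_le_one_left hτ.le
    rw [div_le_one (by positivity)]; linarith
  have hcm : 0 < c ^ m := pow_pos hc0 m
  have hpt : ∀ y ∈ Set.Icc (0:ℝ) τ,
      y * f y - c * f y ≤ f c / c ^ m * (y ^ (m+1) - c * y ^ m) := by
    intro y hy
    have e : f c / c ^ m * (y ^ (m+1) - c * y ^ m) = (y - c) * (f c * y ^ m / c ^ m) := by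
      field_simp; ring
    rw [e, ← sub_mul]
    rcases le_total y c with h | h
    · apply mul_le_mul_of_nonpos_left _ (by linarith)
      rw [div_le_iff₀ hcm]
      exact key y c hy.1 hc0 h hcτ
    · apply mul_le_mul_of_nonneg_left _ (by linarith)
      rw [le_div_iff₀ hcm]
      exact key c y hc0.le (hc0.trans_le h) h hy.2
  have hi := intervalIntegral.integral_mono_on (μ := MeasureTheory.volume) hτ.le
    (Continuous.intervalIntegrable (by fun_prop) _ _)
    (Continuous.intervalIntegrable (by fun_prop) _ _) hpt
  rw [intervalIntegral.integral_sub (Continuous.intervalIntegrable (by fun_prop) _ _)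
    (Continuous.intervalIntegrable (by fun_prop) _ _), intervalIntegral.integral_const_mul,
    intervalIntegral.integral_const_mul,
    intervalIntegral.integral_sub (Continuous.intervalIntegrable (by fun_prop) _ _)
    (Continuous.intervalIntegrable (by fun_prop) _ _), intervalIntegral.integral_const_mul,
    integral_pow, integral_pow] at hi
  have hz : (τ ^ (m + 1 + 1) - 0 ^ (m + 1 + 1)) / (((m + 1 : ℕ) : ℝ) + 1)
      - c * ((τ ^ (m + 1) - 0 ^ (m + 1)) / ((m : ℝ) + 1)) = 0 := by
    rw [hc]; push_cast
    have : (m:ℝ) + 1 ≠ 0 := by positivity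
    have : (m:ℝ) + 1 + 1 ≠ 0 := by positivity
    simp only [ne_eq, Nat.add_eq_zero_iff, one_ne_zero, and_false, not_false_eq_true, zero_pow]
    field_simp
    ring
  rw [hz, mul_zero] at hi
  linarith
end

section
/- Let n ≥ 1 be an integer and let A, τ, S, δ′ be real numbers with A > 0, τ > 0, 0 ≤ S ≤ (n/(n+1))·τ, and δ′ > 0. Assume that (1+δ′)·A − δ′·τ ≥ S. Define θ := max{2n/(2n+1), 2δ′/(2δ′+1)} and ε′ := min{ (δ′·(1−θ)/θ)/(1 − δ′·(1−θ)/θ), 1/(2n+1) }. Then ε′ ∈ (0, 1) and A ≥ (1+ε′)·S. -/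
theorem stmt_4 (n : ℕ) (hn : 1 ≤ n) (A τ S δ' : ℝ)
    (hA : 0 < A) (hτ : 0 < τ) (hS0 : 0 ≤ S)
    (hS : S ≤ ((n : ℝ) / ((n : ℝ) + 1)) * τ) (hδ' : 0 < δ')
    (h1 : S ≤ (1 + δ') * A - δ' * τ) :
    (0 < min ((δ' * (1 - max ((2 * (n : ℝ)) / (2 * (n : ℝ) + 1)) ((2 * δ') / (2 * δ' + 1)))
          / max ((2 * (n : ℝ)) / (2 * (n : ℝ) + 1)) ((2 * δ') / (2 * δ' + 1)))
        / (1 - δ' * (1 - max ((2 * (n : ℝ)) / (2 * (n : ℝ) + 1)) ((2 * δ') / (2 * δ' + 1)))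
          / max ((2 * (n : ℝ)) / (2 * (n : ℝ) + 1)) ((2 * δ') / (2 * δ' + 1))))
      (1 / (2 * (n : ℝ) + 1))
     ∧ min ((δ' * (1 - max ((2 * (n : ℝ)) / (2 * (n : ℝ) + 1)) ((2 * δ') / (2 * δ' + 1)))
          / max ((2 * (n : ℝ)) / (2 * (n : ℝ) + 1)) ((2 * δ') / (2 * δ' + 1)))
        / (1 - δ' * (1 - max ((2 * (n : ℝ)) / (2 * (n : ℝ) + 1)) ((2 * δ') / (2 * δ' + 1)))
          / max ((2 * (n : ℝ)) / (2 * (n : ℝ) + 1)) ((2 * δ') / (2 * δ' + 1))))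
      (1 / (2 * (n : ℝ) + 1)) < 1)
    ∧ (1 + min ((δ' * (1 - max ((2 * (n : ℝ)) / (2 * (n : ℝ) + 1)) ((2 * δ') / (2 * δ' + 1)))
          / max ((2 * (n : ℝ)) / (2 * (n : ℝ) + 1)) ((2 * δ') / (2 * δ' + 1)))
        / (1 - δ' * (1 - max ((2 * (n : ℝ)) / (2 * (n : ℝ) + 1)) ((2 * δ') / (2 * δ' + 1)))
          / max ((2 * (n : ℝ)) / (2 * (n : ℝ) + 1)) ((2 * δ') / (2 * δ' + 1))))
      (1 / (2 * (n : ℝ) + 1))) * S ≤ A := by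
  have hN : (1 : ℝ) ≤ (n : ℝ) := by exact_mod_cast hn
  generalize (n : ℝ) = N at *
  have hθ1 : (2 * N) / (2 * N + 1) ≤ max ((2 * N) / (2 * N + 1)) ((2 * δ') / (2 * δ' + 1)) :=
    le_max_left _ _
  have hθ2 : (2 * δ') / (2 * δ' + 1) ≤ max ((2 * N) / (2 * N + 1)) ((2 * δ') / (2 * δ' + 1)) :=
    le_max_right _ _
  have hθ3 : max ((2 * N) / (2 * N + 1)) ((2 * δ') / (2 * δ' + 1)) < 1 := by
    apply max_lt
    · rw [div_lt_one (by positivity)]; linarith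
    · rw [div_lt_one (by positivity)]; linarith
  generalize max ((2 * N) / (2 * N + 1)) ((2 * δ') / (2 * δ' + 1)) = θ at *
  have hθ0 : 0 < θ := lt_of_lt_of_le (by positivity) hθ2
  rw [div_le_iff₀ (by positivity)] at hθ1 hθ2
  have hr0 : 0 < δ' * (1 - θ) / θ := div_pos (mul_pos hδ' (by linarith)) hθ0
  have hr1 : δ' * (1 - θ) / θ < 1 := by
    rw [div_lt_one hθ0]; nlinarith
  have hrθ : δ' * (1 - θ) / θ * θ = δ' * (1 - θ) := div_mul_cancel₀ _ hθ0.ne'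
  generalize δ' * (1 - θ) / θ = r at *
  have h1r : 0 < 1 - r := by linarith
  refine ⟨⟨lt_min (by positivity) (by positivity), ?_⟩, ?_⟩
  · refine lt_of_le_of_lt (min_le_right _ _) ?_
    rw [div_lt_one (by positivity)]; linarith
  · rcases le_total A (θ * τ) with h | h
    · have h2 : (1 + r / (1 - r)) * S ≤ A := by
        have e : (1 + r / (1 - r)) * S = S / (1 - r) := by field_simp; ring
        rw [e, div_le_iff₀ h1r]
        have h3 : θ * S ≤ θ * (A * (1 - r)) := by
          have := mul_le_mul_of_nonneg_left h1 hθ0.le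
          have := mul_le_mul_of_nonneg_left h hδ'.le
          have e2 : θ * (A * (1 - r)) = θ * A - A * (δ' * (1 - θ)) := by rw [← hrθ]; ring
          rw [e2]; linarith
        exact le_of_mul_le_mul_left h3 hθ0
      refine le_trans (mul_le_mul_of_nonneg_right ?_ hS0) h2
      linarith [min_le_left (r / (1 - r)) (1 / (2 * N + 1))]
    · have h2 : (1 + 1 / (2 * N + 1)) * S ≤ A := by
        have a : 2 * N / (2 * N + 1) * τ ≤ θ * τ :=
          mul_le_mul_of_nonneg_right ((div_le_iff₀ (by positivity)).2 hθ1) hτ.le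
        have b : (1 + 1 / (2 * N + 1)) * S ≤ (1 + 1 / (2 * N + 1)) * (N / (N + 1) * τ) :=
          mul_le_mul_of_nonneg_left hS (by positivity)
        have c : (1 + 1 / (2 * N + 1)) * (N / (N + 1) * τ) = 2 * N / (2 * N + 1) * τ := by
          field_simp; ring
        linarith
      refine le_trans (mul_le_mul_of_nonneg_right ?_ hS0) h2
      linarith [min_le_right (r / (1 - r)) (1 / (2 * N + 1))]
end

section
/- Let n ≥ 1 be an integer and let T be a set of triples (A, τ, S) of real numbers such that for every (A, τ, S) ∈ T one has A > 0, τ > 0, and τ/(n+1) ≤ S ≤ (n/(n+1))·τ. Then the following are equivalent: (i) there exists δ′ > 0 such that for every (A, τ, S) ∈ T, (1+δ′)·A − δ′·τ ≥ S; (ii) there exists ε′ > 0 such that for every (A, τ, S) ∈ T, A ≥ (1+ε′)·S. -/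
theorem stmt_5 (n : ℕ) (hn : 1 ≤ n) (T : Set (ℝ × ℝ × ℝ))
    (hT : ∀ t ∈ T, 0 < t.1 ∧ 0 < t.2.1 ∧
      t.2.1 / ((n : ℝ) + 1) ≤ t.2.2 ∧ t.2.2 ≤ ((n : ℝ) / ((n : ℝ) + 1)) * t.2.1) :
    (∃ δ' : ℝ, 0 < δ' ∧ ∀ t ∈ T, t.2.2 ≤ (1 + δ') * t.1 - δ' * t.2.1) ↔
    (∃ ε' : ℝ, 0 < ε' ∧ ∀ t ∈ T, (1 + ε') * t.2.2 ≤ t.1) := by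
  have hn0 : (0 : ℝ) < n := by exact_mod_cast hn
  have hn1 : (0 : ℝ) < (n : ℝ) + 1 := by linarith
  constructor
  · rintro ⟨d, hd, h⟩
    have hp : 0 < (n : ℝ) * (1 + d) := by positivity
    refine ⟨d / (n * (1 + d)), by positivity, ?_⟩
    rintro ⟨A, τ, S⟩ ht
    obtain ⟨hA, hτ, h1, h2⟩ := hT _ ht
    have h3 := h _ ht
    simp only at *
    rw [div_mul_eq_mul_div, le_div_iff₀ hn1] at h2
    have e1 : (n : ℝ) * S ≤ n * ((1 + d) * A - d * τ) := mul_le_mul_of_nonneg_left h3 hn0.le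
    have e2 : d * (S * (n + 1)) ≤ d * (n * τ) := mul_le_mul_of_nonneg_left h2 hd.le
    have e3 : (1 + d / (n * (1 + d))) * S = ((n * (1 + d) + d) * S) / (n * (1 + d)) := by
      field_simp
    rw [e3, div_le_iff₀ hp]
    linarith
  · rintro ⟨e, he, h⟩
    obtain ⟨d, hd⟩ : ∃ d : ℝ, d = e / n := ⟨_, rfl⟩
    have hd0 : 0 < d := by rw [hd]; positivity
    have hde : e = d * n := by rw [hd]; field_simp
    refine ⟨d, hd0, ?_⟩
    rintro ⟨A, τ, S⟩ ht
    obtain ⟨hA, hτ, h1, h2⟩ := hT _ ht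
    have h3 := h _ ht
    simp only at *
    have hS : 0 < S := lt_of_lt_of_le (by positivity) h1
    rw [div_le_iff₀ hn1] at h1
    have e1 : (1 + d) * ((1 + e) * S) ≤ (1 + d) * A := mul_le_mul_of_nonneg_left h3 (by linarith)
    have e2 : d * τ ≤ d * (S * (n + 1)) := mul_le_mul_of_nonneg_left h1 hd0.le
    have e3 : 0 ≤ d * e * S := by positivity
    have e4 : e * S = d * n * S := by rw [← hde]
    linarith
end
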